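/- Fix θ ∈ (0, π) and real numbers c, d, M, M̄, l, l̄, p, p̄. Let G(r) be a family of symmetric 3×3 real matrices satisfying, as r → ∞: G₁₁ = 1 + 2M/r + (−c²/2 − d²/2 + l² + l̄² + M̄)/r² + O(1/r³), G₂₂ = r² + 2rc + 2c² + 2d² + O(1/r), G₃₃ = (r² − 2rc + 2c² + 2d²) sin²θ + O(1/r), G₁₂ = −l + (−2cl − 2dl̄ + p)/r + O(1/r²), G₁₃ = −l̄ sin θ + (sin θ)(2cl̄ − 2dl + p̄)/r + O(1/r²), G₂₃ = 2rd sin θ + O(1/r). Then for all sufficiently large r the matrix G(r) is invertible and its inverse satisfies: (G⁻¹)₁₁ = 1 − 2M/r + (c²/2 + d²/2 + 4M² − M̄)/r² + O(1/r³), (G⁻¹)₂₂ = 1/r² − 2c/r³ + (2c² + 2d² + l²)/r⁴ + O(1/r⁵), (G⁻¹)₃₃ = csc²θ/r² + 2c·csc²θ/r³ + csc²θ·(2c² + 2d² + l̄²)/r⁴ + O(1/r⁵), (G⁻¹)₁₂ = l/r² − (2Ml + p)/r³ + O(1/r⁴), (G⁻¹)₁₃ = l̄ csc θ/r² − csc θ·(2Ml̄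 + p̄)/r³ + O(1/r⁴), (G⁻¹)₂₃ = −2d csc θ/r³ + l·l̄·csc θ/r⁴ + O(1/r⁵). -/

import Mathlib

/-!
Rescaling by `D = diag(1, 1/r, 1/(r sin θ))` turns the metric into
`D G D = 1 + A₁ / r + A₂ / r² + O(1/r³)` with *every* entry known to the same order: the orders of
the error terms in the hypotheses are exactly those compensated by the rescaling. The Neumann series
(`NormedRing.inverse_add_norm_diff_nth_order` at order three) then gives
`(D G D)⁻¹ = 1 - A₁ / r + (A₁² - A₂) / r² + O(1/r³)`, see `inv_entry_expansion`.
Since `G⁻¹ = D (D G D)⁻¹ D`, reading off the entries yields the claim: the conjugation by `D`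
again multiplies each entry by the right power of `1/r`.
-/

open Real

/-- `f(r) = O(r^{-k})` at spatial infinity: there are `C, r₀ > 0` with
`|f r| ≤ C / r^k` for all `r ≥ r₀`. -/
def BigO (f : ℝ → ℝ) (k : ℕ) : Prop :=
  ∃ C r₀ : ℝ, 0 < C ∧ 0 < r₀ ∧ ∀ r : ℝ, r₀ ≤ r → |f r| ≤ C / r ^ k

open Filter Asymptotics Topology

lemma bigO_iff_isBigO (f : ℝ → ℝ) (k : ℕ) :
    BigO f k ↔ f =O[atTop] fun r : ℝ => r⁻¹ ^ k := by
  constructor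
  · rintro ⟨C, r₀, -, hr₀, h⟩
    refine IsBigO.of_bound C ?_
    filter_upwards [eventually_ge_atTop r₀] with r hr
    have hr0 : 0 < r := hr₀.trans_le hr
    rw [Real.norm_eq_abs, Real.norm_of_nonneg (by positivity), inv_pow, ← div_eq_mul_inv]
    exact h r hr
  · intro h
    obtain ⟨C, hC, h⟩ := h.exists_pos
    obtain ⟨r₀, hr₀⟩ := eventually_atTop.1 h.bound
    refine ⟨C, max r₀ 1, hC, by positivity, fun r hr => ?_⟩
    have hr0 : 0 < r := zero_lt_one.trans_le ((le_max_right _ _).trans hr)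
    have := hr₀ r ((le_max_left _ _).trans hr)
    rwa [Real.norm_eq_abs, Real.norm_of_nonneg (by positivity), inv_pow, ← div_eq_mul_inv] at this

/-- Multiplying by `a / r ^ m` improves the decay order by `m`. -/
lemma BigO.scale {f g : ℝ → ℝ} {k n : ℕ} (hf : BigO f k) (a : ℝ) (m : ℕ)
    (hg : ∀ᶠ r : ℝ in atTop, g r = a * r⁻¹ ^ m * f r) (hn : k + m = n) : BigO g n := by
  rw [bigO_iff_isBigO] at hf ⊢
  subst hn
  refine IsBigO.congr' (f₁ := fun r => a * r⁻¹ ^ m * f r)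
    (g₁ := fun r => r⁻¹ ^ m * r⁻¹ ^ k) ?_ (hg.mono fun r hr => hr.symm)
    (Eventually.of_forall fun r => by simp only; ring)
  exact (isBigO_const_mul_self a _ _).mul hf

section

-- the Neumann series needs a submultiplicative norm: the `ℓ^∞` operator norm
attribute [local instance] Matrix.linftyOpNormedRing Matrix.linftyOpNormedAlgebra

lemma abs_entry_le_norm {n : ℕ} (A : Matrix (Fin n) (Fin n) ℝ) (i j : Fin n) : |A i j| ≤ ‖A‖ := by
  rw [← Real.norm_eq_abs, ← coe_nnnorm, ← coe_nnnorm, NNReal.coe_le_coe, Matrix.linfty_opNNNorm_def]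
  exact (Finset.single_le_sum (f := fun j => ‖A i j‖₊) (fun _ _ => zero_le) (Finset.mem_univ j)).trans
    (Finset.le_sup (f := fun i => ∑ j, ‖A i j‖₊) (Finset.mem_univ i))

lemma isBigO_of_entries {n : ℕ} {F : ℝ → Matrix (Fin n) (Fin n) ℝ} {g : ℝ → ℝ} {L : Filter ℝ}
    (h : ∀ i j, (fun r => F r i j) =O[L] g) : F =O[L] g := by
  have h1 : (fun r => ∑ i, ∑ j, F r i j • Matrix.single i j (1 : ℝ)) =O[L] g := by
    refine IsBigO.fun_sum fun i _ => IsBigO.fun_sum fun j _ => ?_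
    refine IsBigO.trans (IsBigO.of_bound ‖Matrix.single i j (1 : ℝ)‖ ?_) (h i j)
    exact Eventually.of_forall fun r => by rw [norm_smul, mul_comm]
  refine h1.congr_left fun r => ?_
  conv_rhs => rw [Matrix.matrix_eq_sum_single (F r)]
  simp [Matrix.smul_single]

/-- Second-order Neumann expansion of the inverse of `1 + A₁ / r + A₂ / r² + O(1/r³)`, entrywise. -/
lemma inv_entry_expansion {n : ℕ} (T : ℝ → Matrix (Fin n) (Fin n) ℝ)
    (A₁ A₂ : Matrix (Fin n) (Fin n) ℝ)
    (h : ∀ i j, BigO (fun r => T r i j - (1 + r⁻¹ • A₁ + r⁻¹ ^ 2 • A₂) i j) 3) :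
    (∀ᶠ r in atTop, IsUnit (T r)) ∧
    ∀ i j, BigO (fun r => (T r)⁻¹ i j - (1 - r⁻¹ • A₁ + r⁻¹ ^ 2 • (A₁ * A₁ - A₂)) i j) 3 := by
  have : CompleteSpace (Matrix (Fin n) (Fin n) ℝ) := FiniteDimensional.complete ℝ _
  have hx : Tendsto (fun r : ℝ => r⁻¹) atTop (𝓝 0) := tendsto_inv_atTop_zero
  have hpow {a b : ℕ} (hab : b ≤ a) :
      (fun r : ℝ => r⁻¹ ^ a) =O[atTop] fun r : ℝ => r⁻¹ ^ b :=
    IsBigO.of_bound 1 <| by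
      filter_upwards [eventually_ge_atTop 1] with r hr
      have : r⁻¹ ^ a ≤ r⁻¹ ^ b := pow_le_pow_of_le_one (by positivity) (inv_le_one_of_one_le₀ hr) hab
      rwa [one_mul, Real.norm_of_nonneg (by positivity), Real.norm_of_nonneg (by positivity)]
  have hsm (k : ℕ) (A : Matrix (Fin n) (Fin n) ℝ) :
      (fun r : ℝ => r⁻¹ ^ k • A) =O[atTop] fun r : ℝ => r⁻¹ ^ k :=
    IsBigO.of_bound ‖A‖ (by simp [norm_smul, mul_comm])
  have hE : (fun r => T r - (1 + r⁻¹ • A₁ + r⁻¹ ^ 2 • A₂)) =O[atTop] fun r : ℝ => r⁻¹ ^ 3 :=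
    isBigO_of_entries fun i j => (bigO_iff_isBigO _ _).1 (h i j)
  have hw : (fun r => T r - (1 + r⁻¹ • A₁)) =O[atTop] fun r : ℝ => r⁻¹ ^ 2 :=
    ((hE.trans (hpow (by norm_num))).add (hsm 2 A₂)).congr_left fun r => by abel
  have hA : (fun r : ℝ => r⁻¹ • A₁) =O[atTop] fun r : ℝ => r⁻¹ ^ 1 := by simpa using hsm 1 A₁
  have ht : (fun r => T r - 1) =O[atTop] fun r : ℝ => r⁻¹ ^ 1 :=
    ((hw.trans (hpow (by norm_num))).add hA).congr_left fun r => by abel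
  have ht0 : Tendsto (fun r => T r - 1) atTop (𝓝 0) :=
    ht.trans_tendsto (by simpa using hx)
  have hunit : ∀ᶠ r in atTop, IsUnit (T r) := by
    have : Tendsto T atTop (𝓝 1) := by simpa using ht0.add_const 1
    exact this.eventually (Units.isOpen.mem_nhds isUnit_one)
  refine ⟨hunit, fun i j => (bigO_iff_isBigO _ _).2 ?_⟩
  -- the Neumann series, truncated after the quadratic term
  have hN : (fun r => (T r)⁻¹ - (1 - (T r - 1) + (T r - 1) ^ 2)) =O[atTop]
      fun r : ℝ => r⁻¹ ^ 3 := by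
    have h3 := (NormedRing.inverse_add_norm_diff_nth_order
      (1 : (Matrix (Fin n) (Fin n) ℝ)ˣ) 3).comp_tendsto ht0
    refine (h3.trans (by simpa [Function.comp_def] using ht.norm_left.pow 3)).congr_left fun r => ?_
    simp [Matrix.nonsing_inv_eq_ringInverse, Finset.sum_range_succ, ← sub_eq_add_neg]
  have hsq : (fun r => (T r - 1) ^ 2 - r⁻¹ ^ 2 • (A₁ * A₁)) =O[atTop] fun r : ℝ => r⁻¹ ^ 3 := by
    have h1 := (ht.mul hw).congr_right (g₂ := fun r : ℝ => r⁻¹ ^ 3) fun r => by ring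
    have h2 := (hw.mul hA).congr_right (g₂ := fun r : ℝ => r⁻¹ ^ 3) fun r => by ring
    refine (h1.add h2).congr_left fun r => ?_
    rw [pow_two r⁻¹, ← smul_mul_smul_comm]
    generalize r⁻¹ • A₁ = B
    noncomm_ring
  have hfin : (fun r => (T r)⁻¹ - (1 - r⁻¹ • A₁ + r⁻¹ ^ 2 • (A₁ * A₁ - A₂))) =O[atTop]
      fun r : ℝ => r⁻¹ ^ 3 := by
    refine ((hN.add hsq).sub hE).congr_left fun r => ?_
    rw [smul_sub]
    abel
  exact (IsBigO.of_bound 1 (Eventually.of_forall fun r => by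
    rw [one_mul]; exact abs_entry_le_norm
      ((T r)⁻¹ - (1 - r⁻¹ • A₁ + r⁻¹ ^ 2 • (A₁ * A₁ - A₂))) i j)).trans hfin

end

/-- If `D * G * D` is invertible then `G⁻¹ = D * (D * G * D)⁻¹ * D`. -/
lemma inv_eq_conj {n : ℕ} (G D : Matrix (Fin n) (Fin n) ℝ) (h : IsUnit (D * G * D)) :
    G⁻¹ = D * (D * G * D)⁻¹ * D := by
  have h1 : D * (G * D * (D * G * D)⁻¹) = 1 := by
    rw [← mul_assoc, ← mul_assoc]
    exact Matrix.mul_nonsing_inv _ ((Matrix.isUnit_iff_isUnit_det _).1 h)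
  refine Matrix.inv_eq_right_inv ?_
  rw [mul_eq_one_comm] at h1
  simpa only [mul_assoc] using h1

/-- Asymptotic expansion at spatial infinity of the inverse metric `g^{ij}` on a
slice `{t = t₀}` of a Bondi radiating spacetime, derived from the expansion of the
induced metric `g_{ij}`. -/
theorem inverse_metric_expansion
    (θ c d M Mb l lb p pb : ℝ) (hθ : θ ∈ Set.Ioo 0 π)
    (G : ℝ → Matrix (Fin 3) (Fin 3) ℝ) (hsymm : ∀ r, (G r).IsSymm)
    (h11 : BigO (fun r => G r 0 0
      - (1 + 2 * M / r + (-(c ^ 2 / 2) - d ^ 2 / 2 + l ^ 2 + lb ^ 2 + Mb) / r ^ 2)) 3)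
    (h22 : BigO (fun r => G r 1 1 - (r ^ 2 + 2 * r * c + 2 * c ^ 2 + 2 * d ^ 2)) 1)
    (h33 : BigO (fun r => G r 2 2
      - ((r ^ 2 - 2 * r * c + 2 * c ^ 2 + 2 * d ^ 2) * sin θ ^ 2)) 1)
    (h12 : BigO (fun r => G r 0 1 - (-l + (-(2 * c * l) - 2 * d * lb + p) / r)) 2)
    (h13 : BigO (fun r => G r 0 2
      - (-(lb * sin θ) + sin θ * (2 * c * lb - 2 * d * l + pb) / r)) 2)
    (h23 : BigO (fun r => G r 1 2 - 2 * r * d * sin θ) 1) :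
    (∃ r₁ : ℝ, ∀ r : ℝ, r₁ ≤ r → IsUnit (G r).det) ∧
    BigO (fun r => (G r)⁻¹ 0 0
      - (1 - 2 * M / r + (c ^ 2 / 2 + d ^ 2 / 2 + 4 * M ^ 2 - Mb) / r ^ 2)) 3 ∧
    BigO (fun r => (G r)⁻¹ 1 1
      - (1 / r ^ 2 - 2 * c / r ^ 3 + (2 * c ^ 2 + 2 * d ^ 2 + l ^ 2) / r ^ 4)) 5 ∧
    BigO (fun r => (G r)⁻¹ 2 2
      - ((sin θ)⁻¹ ^ 2 / r ^ 2 + 2 * c * (sin θ)⁻¹ ^ 2 / r ^ 3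
        + (sin θ)⁻¹ ^ 2 * (2 * c ^ 2 + 2 * d ^ 2 + lb ^ 2) / r ^ 4)) 5 ∧
    BigO (fun r => (G r)⁻¹ 0 1 - (l / r ^ 2 - (2 * M * l + p) / r ^ 3)) 4 ∧
    BigO (fun r => (G r)⁻¹ 0 2
      - (lb * (sin θ)⁻¹ / r ^ 2 - (sin θ)⁻¹ * (2 * M * lb + pb) / r ^ 3)) 4 ∧
    BigO (fun r => (G r)⁻¹ 1 2
      - (-(2 * d * (sin θ)⁻¹ / r ^ 3) + l * lb * (sin θ)⁻¹ / r ^ 4)) 5 := by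
  have hs : sin θ ≠ 0 := (sin_pos_of_mem_Ioo hθ).ne'
  set s := sin θ
  -- the diagonal of the rescaling matrix `D`
  set v : ℝ → Fin 3 → ℝ := fun r => ![1, r⁻¹, r⁻¹ * s⁻¹] with hv
  set T : ℝ → Matrix (Fin 3) (Fin 3) ℝ :=
    fun r => Matrix.diagonal (v r) * G r * Matrix.diagonal (v r) with hT
  have hTe (r : ℝ) (i j : Fin 3) : T r i j = v r i * G r i j * v r j := by
    simp [hT, Matrix.mul_diagonal, Matrix.diagonal_mul]
  have h10 (r : ℝ) : G r 1 0 = G r 0 1 := (hsymm r).apply 0 1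
  have h20 (r : ℝ) : G r 2 0 = G r 0 2 := (hsymm r).apply 0 2
  have h21 (r : ℝ) : G r 2 1 = G r 1 2 := (hsymm r).apply 1 2
  obtain ⟨hunit, hinv⟩ := inv_entry_expansion T
    !![2 * M, -l, -lb; -l, 2 * c, 2 * d; -lb, 2 * d, -(2 * c)]
    !![-(c ^ 2 / 2) - d ^ 2 / 2 + l ^ 2 + lb ^ 2 + Mb, -(2 * c * l) - 2 * d * lb + p,
        2 * c * lb - 2 * d * l + pb;
      -(2 * c * l) - 2 * d * lb + p, 2 * c ^ 2 + 2 * d ^ 2, 0;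
      2 * c * lb - 2 * d * l + pb, 0, 2 * c ^ 2 + 2 * d ^ 2] (by
    intro i j
    fin_cases i <;> fin_cases j
    -- the `(i, j)` entry of the error is `Dᵢ Dⱼ` times the error in the hypothesis on `G`
    on_goal 1 => refine h11.scale 1 0 ?_ rfl
    on_goal 2 => refine h12.scale 1 1 ?_ rfl
    on_goal 3 => refine h13.scale s⁻¹ 1 ?_ rfl
    on_goal 4 => refine h12.scale 1 1 ?_ rfl
    on_goal 5 => refine h22.scale 1 2 ?_ rfl
    on_goal 6 => refine h23.scale s⁻¹ 2 ?_ rfl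
    on_goal 7 => refine h13.scale s⁻¹ 1 ?_ rfl
    on_goal 8 => refine h23.scale s⁻¹ 2 ?_ rfl
    on_goal 9 => refine h33.scale (s⁻¹ ^ 2) 2 ?_ rfl
    all_goals
      filter_upwards [eventually_gt_atTop 0] with r hr
      simp [hTe, hv, h10, h20, h21]
      field_simp
      try ring)
  have hG : ∀ᶠ r in atTop, 0 < r ∧ ∀ i j, (G r)⁻¹ i j = v r i * (T r)⁻¹ i j * v r j := by
    filter_upwards [hunit, eventually_gt_atTop 0] with r hr h0
    refine ⟨h0, fun i j => ?_⟩
    rw [inv_eq_conj _ _ hr]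
    simp [hT, Matrix.mul_diagonal, Matrix.diagonal_mul]
  refine ⟨eventually_atTop.1 (hunit.mono fun r hr => ?_), ?_, ?_, ?_, ?_, ?_, ?_⟩
  · have := (Matrix.isUnit_iff_isUnit_det _).1 hr
    rw [hT, Matrix.det_mul, Matrix.det_mul] at this
    exact isUnit_of_mul_isUnit_right (isUnit_of_mul_isUnit_left this)
  on_goal 1 => refine (hinv 0 0).scale 1 0 ?_ rfl
  on_goal 2 => refine (hinv 1 1).scale 1 2 ?_ rfl
  on_goal 3 => refine (hinv 2 2).scale (s⁻¹ ^ 2) 2 ?_ rfl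
  on_goal 4 => refine (hinv 0 1).scale 1 1 ?_ rfl
  on_goal 5 => refine (hinv 0 2).scale s⁻¹ 1 ?_ rfl
  on_goal 6 => refine (hinv 1 2).scale s⁻¹ 2 ?_ rfl
  all_goals
    filter_upwards [hG] with r hr
    obtain ⟨h0, hr⟩ := hr
    simp [hr, hv]
    field_simp
    try ring
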